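/- arXiv:2105.02166 — 10 statements merged into one kernel-verified Lean document; each statement's English description precedes it below -/
import Mathlib

section
/- Let q be a prime power and let V ⊆ F_{q²}^n be an F_{q²}-linear subspace. Then dim(V ∩ V^{⊥_H}) = dim(V^⊥ ∩ (V^⊥)^{⊥_H}); that is, Δ(V) = Δ(V^⊥) where Δ(W) = dim(W ∩ W^{⊥_H}). -/
/-!
Write `σ` for the coordinatewise map `x ↦ x ^ q`. It is additive and injective, and `σ ∘ σ = id`
because `|F| = q ^ 2`. Raising `∑ w i ^ q * x i` to the power `q` gives `∑ w i * x i ^ q`, so `x` is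
in the Hermitian dual of `W` exactly when `σ x` is in the Euclidean dual of `W`
(`mem_hermDual_iff`). Together with `V^⊥⊥ = V` (`eucDual_eucDual`) this gives
`x ∈ V^⊥ ∩ (V^⊥)^⊥_H ↔ σ x ∈ V ∩ V^⊥_H`. Hence `σ` is a bijection between the two subspaces;
having the same number of elements, they have the same dimension over the finite field.
-/

/-- The Frobenius ring homomorphism `x ↦ x^q` on a field of characteristic `p`,
where `q = p^r`. -/
def frobHom (F : Type) [Field F] (p q : ℕ) (hp : p.Prime) (hchar : CharP F p)
    (hq : ∃ r : ℕ, q = p ^ r) : F →+* F where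
  toFun x := x ^ q
  map_one' := one_pow q
  map_mul' x y := mul_pow x y q
  map_zero' := by
    obtain ⟨r, rfl⟩ := hq
    exact zero_pow (pow_ne_zero r hp.ne_zero)
  map_add' x y := by
    obtain ⟨r, rfl⟩ := hq
    haveI := Fact.mk hp
    exact add_pow_char_pow x y p r

/-- The image `V^q = σ(V)` of a subspace `V ⊆ Fⁿ` under the coordinatewise Frobenius map
`σ(v) = (v₁^q, …, v_n^q)`, as a subspace of `Fⁿ`. -/
def frobPow (F : Type) [Field F] [Fintype F] (p q n : ℕ) (hp : p.Prime) (hchar : CharP F p)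
    (hq : ∃ r : ℕ, q = p ^ r) (V : Submodule F (Fin n → F)) : Submodule F (Fin n → F) where
  carrier := (fun v : Fin n → F => fun i => v i ^ q) '' V
  zero_mem' := ⟨0, V.zero_mem, by
    funext i
    exact map_zero (frobHom F p q hp hchar hq)⟩
  add_mem' := by
    rintro _ _ ⟨a, ha, rfl⟩ ⟨b, hb, rfl⟩
    exact ⟨a + b, V.add_mem ha hb, by
      funext i
      exact map_add (frobHom F p q hp hchar hq) (a i) (b i)⟩
  smul_mem' := by
    rintro c _ ⟨v, hv, rfl⟩
    obtain ⟨d, hd⟩ : ∃ d : F, d ^ q = c :=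
      Finite.injective_iff_surjective.mp (frobHom F p q hp hchar hq).injective c
    refine ⟨d • v, V.smul_mem d hv, ?_⟩
    funext i
    simp [← hd, mul_pow]

/-- The Euclidean dual of a subspace `V ⊆ Fⁿ`. -/
def eucDual (F : Type) [Field F] (n : ℕ) (V : Submodule F (Fin n → F)) :
    Submodule F (Fin n → F) where
  carrier := {x | ∀ v ∈ V, ∑ i, v i * x i = 0}
  zero_mem' := by intro v _; simp
  add_mem' := by
    intro a b ha hb v hv
    simp only [Pi.add_apply, mul_add, Finset.sum_add_distrib, ha v hv, hb v hv, add_zero]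
  smul_mem' := by
    intro c x hx v hv
    simp only [Pi.smul_apply, smul_eq_mul, mul_left_comm, ← Finset.mul_sum, hx v hv, mul_zero]

/-- The Hermitian dual of a subspace `V ⊆ Fⁿ`, with respect to the Hermitian inner product
`v ·_H w = ∑ i, (v i)^q * w i`. -/
def hermDual (F : Type) [Field F] (q n : ℕ) (V : Submodule F (Fin n → F)) :
    Submodule F (Fin n → F) where
  carrier := {x | ∀ v ∈ V, ∑ i, (v i) ^ q * x i = 0}
  zero_mem' := by intro v _; simp
  add_mem' := by
    intro a b ha hb v hv
    simp only [Pi.add_apply, mul_add, Finset.sum_add_distrib, ha v hv, hb v hv, add_zero]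
  smul_mem' := by
    intro c x hx v hv
    simp only [Pi.smul_apply, smul_eq_mul, mul_left_comm, ← Finset.mul_sum, hx v hv, mul_zero]

lemma eucDual_eucDual (F : Type) [Field F] (n : ℕ) (V : Submodule F (Fin n → F)) :
    eucDual F n (eucDual F n V) = V := by
  let B : LinearMap.BilinForm F (Fin n → F) := dotProductBilin F F
  have hsymm : B.IsSymm := ⟨fun x y => dotProduct_comm x y⟩
  have hnd : B.Nondegenerate := by
    refine hsymm.isRefl.nondegenerate_iff_separatingLeft.mpr fun x hx => ?_
    exact dotProduct_eq_zero x hx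
  have key (W : Submodule F (Fin n → F)) : eucDual F n W = B.orthogonal W := rfl
  rw [key, key, LinearMap.BilinForm.orthogonal_orthogonal hnd hsymm.isRefl]

/-- The Hermitian dual is the preimage of the Euclidean dual under `x ↦ x ^ q`. -/
lemma mem_hermDual_iff {F : Type} [Field F] {p q n : ℕ} (hp : p.Prime) (hchar : CharP F p)
    (hq : ∃ r : ℕ, q = p ^ r) (hinv : ∀ a : F, (a ^ q) ^ q = a)
    (W : Submodule F (Fin n → F)) (x : Fin n → F) :
    x ∈ hermDual F q n W ↔ x ^ q ∈ eucDual F n W := by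
  refine forall₂_congr fun w _ => ?_
  rw [← map_eq_zero_iff (frobHom F p q hp hchar hq) (frobHom F p q hp hchar hq).injective, map_sum]
  simp [frobHom, mul_pow, hinv]

theorem stmt_2 (p r q n : ℕ) (hp : p.Prime) (hr : 0 < r) (hq : q = p ^ r)
    (F : Type) [Field F] [Fintype F] (hchar : CharP F p) (hF : Fintype.card F = q ^ 2)
    (V : Submodule F (Fin n → F)) :
    Module.finrank F ↥(V ⊓ hermDual F q n V) =
      Module.finrank F ↥(eucDual F n V ⊓ hermDual F q n (eucDual F n V)) := by
  have hinv (a : F) : (a ^ q) ^ q = a := by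
    rw [← pow_mul, ← sq, ← hF, FiniteField.pow_card]
  have hinv' (x : Fin n → F) : (x ^ q) ^ q = x := funext fun i => hinv (x i)
  have hmem (W : Submodule F (Fin n → F)) (x : Fin n → F) :=
    mem_hermDual_iff hp hchar ⟨r, hq⟩ hinv W x
  have hiff (x : Fin n → F) :
      x ∈ eucDual F n V ⊓ hermDual F q n (eucDual F n V) ↔ x ^ q ∈ V ⊓ hermDual F q n V := by
    rw [Submodule.mem_inf, Submodule.mem_inf, hmem, hmem, hinv', eucDual_eucDual, and_comm]
  let e : ↥(V ⊓ hermDual F q n V) ≃ ↥(eucDual F n V ⊓ hermDual F q n (eucDual F n V)) :=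
    { toFun := fun x => ⟨(x : Fin n → F) ^ q, by rw [hiff, hinv']; exact x.2⟩
      invFun := fun x => ⟨(x : Fin n → F) ^ q, (hiff _).mp x.2⟩
      left_inv := fun x => Subtype.ext (hinv' x)
      right_inv := fun x => Subtype.ext (hinv' x) }
  have hcard := Nat.card_congr e
  rw [Module.natCard_eq_pow_finrank (K := F) (V := ↥(V ⊓ hermDual F q n V)),
    Module.natCard_eq_pow_finrank (K := F)
      (V := ↥(eucDual F n V ⊓ hermDual F q n (eucDual F n V)))] at hcard
  exact Nat.pow_right_injective (Finite.one_lt_card (α := F)) hcard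
end

section
/- Let K be a field, F ⊆ K a subfield, and v : K → Γ₀ a valuation such that v(c) = 1 for every nonzero c ∈ F. Let f₁, …, f_t ∈ K be nonzero elements with pairwise different values v(f₁), …, v(f_t), and let γ ∈ Γ₀. Then the set {φ ∈ span_F(f₁,…,f_t) : φ = 0 or v(φ) ≤ γ} is an F-linear subspace equal to span_F{f_i : v(f_i) ≤ γ}. -/
/-! The elements with pairwise distinct nonzero values are "valuation independent" over `F`: scaling
by a nonzero constant does not change the value, so in `∑ cᵢ fᵢ` the nonzero terms have distinct
values, the term of largest value strictly dominates the sum of the others, and `v (∑ cᵢ fᵢ)` is the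
maximum of the `v (fᵢ)` with `cᵢ ≠ 0` (`le_map_sum_of_injective`). A combination has value at most
`γ` therefore only if every `fᵢ` occurring in it does; the converse is the ultrametric inequality. -/

lemma map_smul_of_trivial {F K Γ₀ : Type*} [Field F] [Field K] [Algebra F K]
    [LinearOrderedCommGroupWithZero Γ₀] {v : Valuation K Γ₀}
    (hv : ∀ c : F, c ≠ 0 → v (algebraMap F K c) = 1) {c : F} (hc : c ≠ 0) (x : K) :
    v (c • x) = v x := by
  rw [Algebra.smul_def, map_mul, hv c hc, one_mul]

/-- No cancellation of values: every term that occurs in a linear combination has value at most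
that of the combination, because the dominant term determines the value of the sum. -/
lemma le_map_sum_of_injective {F K Γ₀ ι : Type*} [Field F] [Field K] [Algebra F K]
    [LinearOrderedCommGroupWithZero Γ₀] [Fintype ι] {v : Valuation K Γ₀}
    (hv : ∀ c : F, c ≠ 0 → v (algebraMap F K c) = 1) {f : ι → K} (hne : ∀ i, f i ≠ 0)
    (hval : ∀ i j, i ≠ j → v (f i) ≠ v (f j)) (c : ι → F) {i : ι} (hi : c i ≠ 0) :
    v (f i) ≤ v (∑ j, c j • f j) := by
  classical
  obtain ⟨m, hm, hmax⟩ := (Finset.univ.filter fun j => c j ≠ 0).exists_max_image (fun j => v (f j))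
    ⟨i, by simpa using hi⟩
  simp only [Finset.mem_filter, Finset.mem_univ, true_and] at hm hmax
  have hrest : v (∑ j ∈ Finset.univ.erase m, c j • f j) < v (c m • f m) := by
    rw [map_smul_of_trivial hv hm]
    refine v.map_sum_lt (v.ne_zero_iff.2 (hne m)) fun j hj => ?_
    by_cases hcj : c j = 0
    · simpa [hcj, zero_lt_iff] using hne m
    · rw [map_smul_of_trivial hv hcj]
      exact lt_of_le_of_ne (hmax j hcj) (hval j m (Finset.ne_of_mem_erase hj))
  rw [← Finset.add_sum_erase _ _ (Finset.mem_univ m), v.map_add_eq_of_lt_left hrest,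
    map_smul_of_trivial hv hm]
  exact hmax i hi

theorem stmt_4 (F K : Type) [Field F] [Field K] [Algebra F K]
    (Γ₀ : Type) [LinearOrderedCommGroupWithZero Γ₀] (v : Valuation K Γ₀)
    (hv : ∀ c : F, c ≠ 0 → v (algebraMap F K c) = 1)
    (t : ℕ) (f : Fin t → K) (hne : ∀ i, f i ≠ 0)
    (hval : ∀ i j, i ≠ j → v (f i) ≠ v (f j)) (γ : Γ₀) :
    {φ : K | φ ∈ Submodule.span F (Set.range f) ∧ (φ = 0 ∨ v φ ≤ γ)} =
      (Submodule.span F (f '' {i | v (f i) ≤ γ}) : Set K) := by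
  ext φ
  simp only [Set.mem_setOf_eq, SetLike.mem_coe]
  constructor
  · rintro ⟨hspan, rfl | hφ⟩
    · exact zero_mem _
    · obtain ⟨c, rfl⟩ := (Submodule.mem_span_range_iff_exists_fun F).1 hspan
      refine Submodule.sum_mem _ fun i _ => ?_
      by_cases hi : c i = 0
      · simp [hi]
      · exact Submodule.smul_mem _ _ (Submodule.subset_span
          ⟨i, (le_map_sum_of_injective hv hne hval c hi).trans hφ, rfl⟩)
  · intro h
    refine ⟨Submodule.span_mono (Set.image_subset_range _ _) h, Or.inr ?_⟩
    induction h using Submodule.span_induction with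
    | mem x hx => obtain ⟨i, hi, rfl⟩ := hx; exact hi
    | zero => simp
    | add x y _ _ hx hy => exact v.map_add_le hx hy
    | smul a x _ hx =>
      by_cases ha : a = 0
      · simp [ha]
      · rwa [map_smul_of_trivial hv ha]
end

section
/- Let q be a prime power and let P = {(α,β) ∈ F_{q²}² : α^{q+1} = β^q + β} be the set of affine points of the Hermitian curve. For a polynomial f ∈ F_{q²}[x,y], let ev(f) ∈ F_{q²}^P be the vector of values (f(α,β))_{(α,β)∈P}. Then the family of vectors ev(x^a y^b), for 0 ≤ a < q² and 0 ≤ b < q, is a basis of the F_{q²}-vector space F_{q²}^P. -/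
/-!
Fix `c` with `c ^ q = c` and consider the fibre `{β | β ^ q + β = c}`. It has at most `q` elements,
being the root set of `X ^ q + X - c`. As `β ^ q + β` always lies in `{c | c ^ q = c}`, which also
has at most `q` elements, the `q ^ 2` elements of `F` are distributed among at most `q` fibres of
size at most `q`, so every such fibre has exactly `q` elements. Applied to `c = α ^ (q + 1)`, this
says that each vertical line meets the curve in exactly `q` points.

Linear independence follows by applying twice the fact that a polynomial of degree `< n` with `n`
roots vanishes: on the line `x = α` a vanishing combination is a polynomial of degree `< q` in `y`
with `q` roots, so its coefficients, polynomials in `x` of degree `< q ^ 2`, vanish at every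
`α ∈ F`, and hence are zero. Finally the curve has at most `q ^ 3` points, so the `q ^ 3`
independent vectors span.
-/

/-- The trace fibre is the root set of `X ^ q + X - c`, a polynomial of degree `q`. -/
lemma card_fiber_le {F : Type} [Field F] [Fintype F] [DecidableEq F] {q : ℕ} (hq : 1 < q) (c : F) :
    (Finset.univ.filter fun β : F => β ^ q + β = c).card ≤ q := by
  open Polynomial in
  have hd : (X ^ q + (X - C c) : F[X]).natDegree = q := by
    rw [natDegree_add_eq_left_of_natDegree_lt] <;> simp [hq]
  have h0 : (Polynomial.X ^ q + (Polynomial.X - Polynomial.C c) : Polynomial F) ≠ 0 := by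
    intro h
    rw [h] at hd
    simp at hd
    omega
  refine (Polynomial.card_le_degree_of_subset_roots (p := Polynomial.X ^ q +
    (Polynomial.X - Polynomial.C c)) ?_).trans hd.le
  intro β hβ
  have hβ' : β ^ q + β = c := by simpa using hβ
  rw [Polynomial.mem_roots h0]
  simp [← hβ']

lemma card_fixed_le {F : Type} [Field F] [Fintype F] [DecidableEq F] {q : ℕ} (hq : 1 < q) :
    (Finset.univ.filter fun c : F => c ^ q = c).card ≤ q := by
  have hd := FiniteField.X_pow_card_sub_X_natDegree_eq F hq
  have h0 := FiniteField.X_pow_card_sub_X_ne_zero F hq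
  refine (Polynomial.card_le_degree_of_subset_roots (p := Polynomial.X ^ q - Polynomial.X)
    ?_).trans hd.le
  intro c hc
  have hc' : c ^ q = c := by simpa using hc
  rw [Polynomial.mem_roots h0]
  simp [hc']

/-- The trace `β ↦ β ^ q + β` maps the `q ^ 2` elements of `F` to the at most `q` solutions of
`c ^ q = c`, with fibres of size at most `q`, so no fibre can be smaller. -/
lemma le_card_fiber {F : Type} [Field F] [Fintype F] [DecidableEq F] {q : ℕ} (hq : 1 < q)
    (hF : Fintype.card F = q ^ 2) (hadd : ∀ x y : F, (x + y) ^ q = x ^ q + y ^ q)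
    {c : F} (hc : c ^ q = c) :
    q ≤ (Finset.univ.filter fun β : F => β ^ q + β = c).card := by
  by_contra! hlt
  have hmaps : ∀ β ∈ (Finset.univ : Finset F),
      β ^ q + β ∈ Finset.univ.filter fun c : F => c ^ q = c := by
    intro β _
    have h : (β ^ q) ^ q = β := by
      rw [← pow_mul, ← sq, ← hF, FiniteField.pow_card]
    simp [hadd, h, add_comm]
  have hsum := Finset.card_eq_sum_card_fiberwise hmaps
  have hlt' := Finset.sum_lt_sum (s := Finset.univ.filter fun c : F => c ^ q = c)
    (f := fun c => (Finset.univ.filter fun β : F => β ^ q + β = c).card) (g := fun _ => q)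
    (fun c _ => card_fiber_le hq c) ⟨c, by simpa using hc, hlt⟩
  rw [← hsum, Finset.card_univ, hF, Finset.sum_const, smul_eq_mul] at hlt'
  have := Nat.mul_le_mul_right q (card_fixed_le (F := F) hq)
  nlinarith

lemma coeff_eq_zero_of_card_le {F : Type} [Field F] {n : ℕ} (s : Finset F) (hs : n ≤ s.card)
    (v : Fin n → F) (h : ∀ x ∈ s, ∑ i : Fin n, x ^ (i : ℕ) * v i = 0) : v = 0 := by
  let f : Fin n → F := fun i => (s.equivFin.symm (Fin.castLE hs i) : F)
  have hf : Function.Injective f :=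
    Subtype.val_injective.comp (s.equivFin.symm.injective.comp (Fin.castLE_injective hs))
  exact Matrix.eq_zero_of_forall_index_sum_pow_mul_eq_zero hf fun j => h _ (Subtype.prop _)

theorem stmt_6 (p r q : ℕ) (hp : p.Prime) (hr : 0 < r) (hq : q = p ^ r)
    (F : Type) [Field F] [Fintype F] (hF : Fintype.card F = q ^ 2) :
    LinearIndependent F
      (fun (ab : Fin (q ^ 2) × Fin q)
          (pt : {ab : F × F // ab.1 ^ (q + 1) = ab.2 ^ q + ab.2}) =>
        (pt : F × F).1 ^ (ab.1 : ℕ) * (pt : F × F).2 ^ (ab.2 : ℕ)) ∧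
    Submodule.span F (Set.range
      (fun (ab : Fin (q ^ 2) × Fin q)
          (pt : {ab : F × F // ab.1 ^ (q + 1) = ab.2 ^ q + ab.2}) =>
        (pt : F × F).1 ^ (ab.1 : ℕ) * (pt : F × F).2 ^ (ab.2 : ℕ))) = ⊤ := by
  classical
  have hq1 : 1 < q := hq ▸ Nat.one_lt_pow hr.ne' hp.one_lt
  have : Fact p.Prime := ⟨hp⟩
  have : CharP F p := by
    apply charP_of_card_eq_prime_pow (f := r * 2)
    rw [hF, hq, ← pow_mul]
  have hadd : ∀ x y : F, (x + y) ^ q = x ^ q + y ^ q := fun x y => by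
    rw [hq, add_pow_char_pow]
  have hnorm : ∀ α : F, (α ^ (q + 1)) ^ q = α ^ (q + 1) := fun α => by
    rw [← pow_mul, add_mul, one_mul, ← sq, pow_add, ← hF, FiniteField.pow_card, pow_succ, mul_comm]
  have hli : LinearIndependent F
      (fun (ab : Fin (q ^ 2) × Fin q)
          (pt : {ab : F × F // ab.1 ^ (q + 1) = ab.2 ^ q + ab.2}) =>
        (pt : F × F).1 ^ (ab.1 : ℕ) * (pt : F × F).2 ^ (ab.2 : ℕ)) := by
    rw [Fintype.linearIndependent_iff]
    intro g hg
    -- the coefficient of `y ^ b` on the line `x = α`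
    have hrow : ∀ α : F, (fun b : Fin q => ∑ a : Fin (q ^ 2), α ^ (a : ℕ) * g (a, b)) = 0 := by
      intro α
      refine coeff_eq_zero_of_card_le _ (le_card_fiber hq1 hF hadd (hnorm α)) _ fun β hβ => ?_
      have hβ' : β ^ q + β = α ^ (q + 1) := by simpa using hβ
      have h := congrFun hg ⟨(α, β), hβ'.symm⟩
      simp only [Finset.sum_apply, Pi.smul_apply, smul_eq_mul, Pi.zero_apply,
        Fintype.sum_prod_type_right] at h
      rw [← h]
      refine Finset.sum_congr rfl fun b _ => ?_
      rw [Finset.mul_sum]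
      exact Finset.sum_congr rfl fun a _ => by ring
    rintro ⟨a, b⟩
    have hcol : (fun a : Fin (q ^ 2) => g (a, b)) = 0 :=
      coeff_eq_zero_of_card_le Finset.univ (by rw [Finset.card_univ, hF]) _
        fun α _ => congrFun (hrow α) b
    exact congrFun hcol a
  refine ⟨hli, ?_⟩
  have hcard : Fintype.card {ab : F × F // ab.1 ^ (q + 1) = ab.2 ^ q + ab.2} ≤ q ^ 2 * q := by
    rw [Fintype.card_subtype, ← hF, ← Finset.card_univ, mul_comm]
    refine Finset.card_le_mul_card_image_of_maps_to (f := Prod.fst) (fun _ _ => Finset.mem_univ _) q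
      fun α _ => le_trans ?_ (card_fiber_le hq1 (α ^ (q + 1)))
    refine Finset.card_le_card_of_injOn Prod.snd ?_ ?_
    · rintro ⟨x, y⟩ h
      simp at h ⊢
      rw [← h.2, h.1]
    · rintro ⟨x, y⟩ h ⟨x', y'⟩ h' hy
      simp at h h' hy
      rw [h.2, h'.2, hy]
  refine hli.span_eq_top_of_card_eq_finrank' (le_antisymm hli.fintype_card_le_finrank ?_)
  simpa using hcard
end

section
/- Let q be a prime power of characteristic p, let I = (x^{q+1} − y^q − y, x^{q²} − x) ⊆ F_{q²}[x,y], and let a ≥ 0 and 0 ≤ b < q be integers with ν = aq + b(q+1). Then (x^a y^b)^q ≡ Σ_{j=0}^{b} (−1)^j binom(b,j) x^{𝔪(ν − j(q+1))} y^j (mod I), where the binomial coefficients are taken modulo p in F_{q²}; moreover every monomial x^{𝔪(ν − j(q+1))} y^j appearing on the right-hand side is reduced. -/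
/-!
Work in the quotient by the ideal and let `x`, `y` be the classes of the variables. The first
generator gives `y ^ q = x ^ (q + 1) - y`, so `(x ^ a * y ^ b) ^ q = x ^ (a * q) * (x ^ (q + 1) - y) ^ b`,
and the binomial theorem expands the right-hand side into terms
`(-1) ^ j * b.choose j * x ^ (a * q + (b - j) * (q + 1)) * y ^ j`. The second generator, `x ^ (q ^ 2) = x`, makes
positive exponents of `x` matter only modulo `q ^ 2 - 1`, so each exponent can be replaced by its
image under `mfun` (`pow_mfun`). Reducedness is the bound `mfun q δ < q ^ 2`
(`mfun_lt`) together with `j ≤ b < q`.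
-/

open MvPolynomial

/-- The map 𝔪: for a nonnegative integer δ, 𝔪(δ) = 0 if δ = 0; 𝔪(δ) = q²−1 if δ ≠ 0 and
(q²−1) ∣ δ; and 𝔪(δ) = δ mod (q²−1) otherwise. -/
def mfun (q δ : ℕ) : ℕ :=
  if δ = 0 then 0 else if δ % (q ^ 2 - 1) = 0 then q ^ 2 - 1 else δ % (q ^ 2 - 1)

/-- Adding `N` to a positive exponent changes nothing; positivity matters, since `x` need not be
a unit. -/
theorem pow_add_mul_of_pow_succ_eq {R : Type*} [CommRing R] {x : R} {N : ℕ} (h : x ^ (N + 1) = x)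
    {k : ℕ} (hk : 0 < k) (t : ℕ) : x ^ (k + N * t) = x ^ k := by
  induction t with
  | zero => simp
  | succ t ih =>
    obtain ⟨k, rfl⟩ := Nat.exists_eq_succ_of_ne_zero hk.ne'
    calc x ^ (k + 1 + N * (t + 1)) = x ^ (k + N * t) * x ^ (N + 1) := by ring
      _ = x ^ (k + 1 + N * t) := by rw [h]; ring
      _ = x ^ (k + 1) := ih

theorem pow_mfun {R : Type*} [CommRing R] {x : R} {q : ℕ} (hq : 2 ≤ q) (h : x ^ (q ^ 2) = x)
    (δ : ℕ) : x ^ mfun q δ = x ^ δ := by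
  have hq2 : 4 ≤ q ^ 2 := by nlinarith
  have h' : x ^ ((q ^ 2 - 1) + 1) = x := by rwa [Nat.sub_add_cancel (by omega)]
  have hδ := Nat.mod_add_div δ (q ^ 2 - 1)
  unfold mfun
  split_ifs with h0 h1
  · rw [h0]
  · -- `δ = N * (t + 1)` is a positive multiple of `N = q ^ 2 - 1`.
    rw [h1, zero_add] at hδ
    obtain ⟨t, ht⟩ : ∃ t, δ / (q ^ 2 - 1) = t + 1 :=
      Nat.exists_eq_succ_of_ne_zero fun h => h0 (by rw [← hδ, h, mul_zero])
    rw [ht] at hδ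
    conv_rhs => rw [← hδ, mul_add, mul_one, add_comm]
    exact (pow_add_mul_of_pow_succ_eq h' (by omega) t).symm
  · conv_rhs => rw [← hδ]
    exact (pow_add_mul_of_pow_succ_eq h' (Nat.pos_of_ne_zero h1) _).symm

theorem mfun_lt {q : ℕ} (hq : 2 ≤ q) (δ : ℕ) : mfun q δ < q ^ 2 := by
  have hq2 : 4 ≤ q ^ 2 := by nlinarith
  have := Nat.mod_lt δ (show q ^ 2 - 1 > 0 by omega)
  unfold mfun
  split_ifs <;> omega

theorem stmt_8 (p r q : ℕ) (hp : p.Prime) (hr : 0 < r) (hq : q = p ^ r)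
    (F : Type) [Field F] [Fintype F] (hF : Fintype.card F = q ^ 2)
    (a b : ℕ) (hb : b < q) :
    ((X 0 ^ a * X 1 ^ b : MvPolynomial (Fin 2) F) ^ q -
        ∑ j ∈ Finset.range (b + 1),
          C ((-1 : F) ^ j * (b.choose j : F)) *
            (X 0 ^ mfun q (a * q + b * (q + 1) - j * (q + 1)) * X 1 ^ j)) ∈
      Ideal.span ({X 0 ^ (q + 1) - X 1 ^ q - X 1, X 0 ^ (q ^ 2) - X 0} :
        Set (MvPolynomial (Fin 2) F)) ∧
    ∀ j ≤ b, mfun q (a * q + b * (q + 1) - j * (q + 1)) < q ^ 2 ∧ j < q := by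
  have hq2 : 2 ≤ q := hq ▸ hp.two_le.trans (Nat.le_self_pow hr.ne' p)
  refine ⟨?_, fun j hj => ⟨mfun_lt hq2 _, hj.trans_lt hb⟩⟩
  set I := Ideal.span ({X 0 ^ (q + 1) - X 1 ^ q - X 1, X 0 ^ (q ^ 2) - X 0} :
        Set (MvPolynomial (Fin 2) F)) with hI
  rw [← Ideal.Quotient.eq]
  set x := Ideal.Quotient.mk I (X 0) with hx
  set y := Ideal.Quotient.mk I (X 1) with hy
  have hxx : x ^ (q ^ 2) = x := by
    rw [hx, ← map_pow, Ideal.Quotient.eq]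
    exact Ideal.subset_span (by simp)
  have hyq : y ^ q = -y + x ^ (q + 1) := by
    have h : Ideal.Quotient.mk I (X 0 ^ (q + 1) - X 1 ^ q - X 1) = 0 :=
      Ideal.Quotient.eq_zero_iff_mem.2 (Ideal.subset_span (by simp))
    simp only [map_sub, map_pow, ← hx, ← hy] at h
    linear_combination -h
  simp only [map_pow, map_mul, map_sum, map_neg, map_one, map_natCast, ← hx, ← hy, pow_mfun hq2 hxx]
  rw [mul_pow, pow_right_comm y, hyq, add_pow, Finset.mul_sum]
  refine Finset.sum_congr rfl fun j hj => ?_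
  have hjb : j ≤ b := Nat.lt_succ_iff.1 (Finset.mem_range.1 hj)
  rw [Nat.add_sub_assoc (Nat.mul_le_mul_right _ hjb), ← Nat.sub_mul, neg_pow y, ← pow_mul, ← pow_mul,
    pow_add, mul_comm (q + 1)]
  ring
end

section
/- Let q be a prime power and let a, b be integers with a ≥ 0 and 0 ≤ b < q, and set ν = aq + b(q+1). (1) For every 0 ≤ j ≤ b, q·𝔪(ν − j(q+1)) + j(q+1) ≡ qν (mod q²−1); consequently, if g ∈ F_{q²}[x,y] is a reduced polynomial with g ≡ (x^a y^b)^q modulo the ideal (x^{q+1} − y^q − y, x^{q²} − x), then every monomial x^{a'} y^{b'} in the support of g satisfies a'q + b'(q+1) ≡ qν (mod q²−1). (2) If (q+1) divides ν, then ν ≡ qν (mod q²−1). -/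
/-!
The statement is about the grading of `F[x, y]` by `ℤ/(q² - 1)` in which `x` has weight `q` and `y`
has weight `q + 1`. The congruences for `mfun` and part (2) follow from `mfun q δ ≡ δ` and
`(q - 1)(q + 1) = q² - 1`.

For the claim on reduced polynomials, let `ζ` generate `Fˣ`, which has order `q² - 1`. The scaling
`(x, y) ↦ (ζ^q x, ζ^(q+1) y)` preserves the points of `x^(q+1) = y^q + y` with `x ∈ F` and `y` in an
algebraic closure `K` of `F`. On these points `g` agrees with `(x^a y^b)^q`, so
`g(ζ^q x, ζ^(q+1) y) - ζ^(qν) g(x, y)` vanishes there. This is again a reduced polynomial, and a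
reduced polynomial vanishing at all these points is zero (`reduced_coeff_eq_zero`): over each of the
`q²` values of `x` there are `q` values of `y`, because `Y^q + Y - c` is separable
(`exists_fiber`). Comparing coefficients, each monomial of `g` of order `w` satisfies
`ζ^w = ζ^(qν)`, that is `w ≡ qν` modulo the order of `ζ`.
-/

open MvPolynomial

theorem mfun_modEq (q δ : ℕ) : mfun q δ ≡ δ [MOD q ^ 2 - 1] := by
  unfold mfun
  split_ifs with h1 h2
  · rw [h1]
  · simp [Nat.ModEq, h2]
  · exact Nat.mod_modEq _ _

/-- Multiplication by `q` fixes multiples of `q + 1` modulo `q² - 1`. -/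
theorem modEq_mul_of_dvd {q n : ℕ} (hq : 0 < q) (h : q + 1 ∣ n) :
    n ≡ q * n [MOD q ^ 2 - 1] := by
  obtain ⟨k, rfl⟩ := h
  obtain ⟨s, rfl⟩ := Nat.exists_eq_add_of_le' hq
  have h1 : (s + 1) ^ 2 - 1 = s * (s + 1 + 1) := by
    rw [Nat.sub_eq_iff_eq_add (Nat.one_le_pow _ _ hq)]; ring
  rw [h1, Nat.modEq_iff_dvd]
  refine ⟨k, ?_⟩
  push_cast
  ring

theorem coeff_eq_zero_of_sum {K : Type*} [Field K] (n : ℕ) (S : Finset K) (hS : S.card = n)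
    (c : ℕ → K) (h : ∀ s ∈ S, ∑ i ∈ Finset.range n, c i * s ^ i = 0) :
    ∀ i < n, c i = 0 := by
  have h0 : (∑ i ∈ Finset.range n, Polynomial.monomial i (c i) : Polynomial K) = 0 := by
    apply Polynomial.eq_zero_of_degree_lt_of_eval_finset_eq_zero S
    · rw [hS]
      rw [Polynomial.degree_lt_iff_coeff_zero]
      intro m hm
      simp only [Polynomial.finsetSum_coeff, Polynomial.coeff_monomial, Finset.sum_ite_eq',
        Finset.mem_range, ite_eq_right_iff]
      omega
    · intro s hs
      simpa [Polynomial.eval_finsetSum] using h s hs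
  intro i hi
  have := congrArg (fun f => Polynomial.coeff f i) h0
  simpa [Polynomial.finsetSum_coeff, Polynomial.coeff_monomial, hi] using this

/-- `Y^q + Y - c` has derivative `1`, hence `q` distinct roots. -/
theorem exists_fiber {K : Type*} [Field K] [IsAlgClosed K] {q : ℕ} (hq : 1 < q)
    (hK : (q : K) = 0) (c : K) :
    ∃ S : Finset K, S.card = q ∧ ∀ y ∈ S, y ^ q + y = c := by
  classical
  set f : Polynomial K := Polynomial.X ^ q + (Polynomial.X - Polynomial.C c) with hf
  have hdeg : f.natDegree = q := by
    rw [hf, Polynomial.natDegree_add_eq_left_of_natDegree_lt] <;> simp [hq]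
  have hf0 : f ≠ 0 := by
    intro h
    rw [h, Polynomial.natDegree_zero] at hdeg
    omega
  have hsep : f.Separable := by
    have hd : Polynomial.derivative f = 1 := by
      simp [hf, Polynomial.derivative_X_pow, hK]
    rw [Polynomial.separable_def, hd]
    exact isCoprime_one_right
  refine ⟨f.roots.toFinset, ?_, ?_⟩
  · rw [Multiset.toFinset_card_of_nodup (Polynomial.nodup_roots hsep),
      ← (IsAlgClosed.splits f).natDegree_eq_card_roots, hdeg]
  · intro y hy
    rw [Multiset.mem_toFinset, Polynomial.mem_roots hf0, Polynomial.IsRoot.def] at hy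
    simp only [hf, Polynomial.eval_add, Polynomial.eval_sub, Polynomial.eval_pow,
      Polynomial.eval_X, Polynomial.eval_C] at hy
    linear_combination hy

/-- A reduced polynomial vanishing at all points of `x^(q+1) = y^q + y` with `x` in `F` and `y` in
an algebraically closed extension has zero coefficients. -/
theorem reduced_coeff_eq_zero {F K : Type*} [Field F] [Fintype F] [Field K] [IsAlgClosed K]
    [Algebra F K] {q : ℕ} (hq : 1 < q) (hK : (q : K) = 0) (hF : Fintype.card F = q ^ 2)
    (c : ℕ → ℕ → K)
    (h : ∀ (x : F) (y : K), y ^ q + y = algebraMap F K x ^ (q + 1) →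
      ∑ j ∈ Finset.range q, ∑ i ∈ Finset.range (q ^ 2),
        c i j * algebraMap F K x ^ i * y ^ j = 0) :
    ∀ i < q ^ 2, ∀ j < q, c i j = 0 := by
  classical
  intro i hi j hj
  refine coeff_eq_zero_of_sum (q ^ 2)
    (Finset.univ.map ⟨algebraMap F K, (algebraMap F K).injective⟩)
    (by simpa using hF) (fun i => c i j) ?_ i hi
  intro s hs
  obtain ⟨x, -, rfl⟩ := Finset.mem_map.1 hs
  obtain ⟨S, hS, hS'⟩ := exists_fiber hq hK (algebraMap F K x ^ (q + 1))
  refine coeff_eq_zero_of_sum q S hS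
    (fun j => ∑ i ∈ Finset.range (q ^ 2), c i j * algebraMap F K x ^ i) ?_ j hj
  intro y hy
  simpa [Finset.sum_mul] using h x y (hS' y hy)

/-- Evaluation of a reduced polynomial as a double sum over all reduced exponents. -/
theorem aeval_reduced {F K : Type*} [Field F] [Field K] [Algebra F K] {n q : ℕ}
    (g : MvPolynomial (Fin 2) F) (hg : ∀ m ∈ g.support, m 0 < n ∧ m 1 < q) (x y : K) :
    aeval ![x, y] g = ∑ j ∈ Finset.range q, ∑ i ∈ Finset.range n,
      algebraMap F K (g.coeff (Finsupp.single 0 i + Finsupp.single 1 j)) * x ^ i * y ^ j := by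
  classical
  have hm : ∀ m : Fin 2 →₀ ℕ, Finsupp.single 0 (m 0) + Finsupp.single 1 (m 1) = m := by
    intro m
    ext k
    fin_cases k <;> simp
  rw [aeval_def, eval₂_eq', ← Finset.sum_product']
  refine Finset.sum_bij_ne_zero (fun m _ _ => (m 1, m 0)) ?_ ?_ ?_ ?_
  · intro m h _
    simp [hg m h]
  · intro m₁ _ _ m₂ _ _ h
    simp only [Prod.mk.injEq] at h
    rw [← hm m₁, ← hm m₂, h.1, h.2]
  · rintro ⟨j, i⟩ _ h
    refine ⟨Finsupp.single 0 i + Finsupp.single 1 j, ?_, ?_, by simp⟩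
    · rw [mem_support_iff]
      intro h0
      simp [h0] at h
    · simpa [Fin.prod_univ_two, mul_assoc] using h
  · intro m _ _
    rw [hm m]
    simp [Fin.prod_univ_two, mul_assoc]

theorem support_order_modEq {F : Type*} [Field F] [Fintype F] {q : ℕ} (hq : 1 < q)
    (hF : Fintype.card F = q ^ 2) (a b : ℕ) (g : MvPolynomial (Fin 2) F)
    (hg : ∀ m ∈ g.support, m 0 < q ^ 2 ∧ m 1 < q)
    (hI : (X 0 ^ a * X 1 ^ b : MvPolynomial (Fin 2) F) ^ q - g ∈
        Ideal.span ({X 0 ^ (q + 1) - X 1 ^ q - X 1, X 0 ^ (q ^ 2) - X 0} :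
          Set (MvPolynomial (Fin 2) F))) :
    ∀ m ∈ g.support,
      m 0 * q + m 1 * (q + 1) ≡ q * (a * q + b * (q + 1)) [MOD q ^ 2 - 1] := by
  classical
  let K := AlgebraicClosure F
  have hqF : (q : F) = 0 := by
    have h := FiniteField.cast_card_eq_zero F
    rw [hF, Nat.cast_pow] at h
    exact pow_eq_zero_iff (two_ne_zero) |>.1 h
  have hqK : (q : K) = 0 := by
    rw [← map_natCast (algebraMap F K), hqF, map_zero]
  have hpow : ∀ x : F, x ^ (q ^ 2) = x := fun x => by rw [← hF, FiniteField.pow_card]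
  -- On the points of the curve, `g` agrees with `(x^a y^b)^q`.
  have hval : ∀ (x : F) (y : K), y ^ q + y = algebraMap F K x ^ (q + 1) →
      aeval ![algebraMap F K x, y] g = (algebraMap F K x ^ a * y ^ b) ^ q := by
    intro x y hxy
    have hle : Ideal.span ({X 0 ^ (q + 1) - X 1 ^ q - X 1, X 0 ^ (q ^ 2) - X 0} :
          Set (MvPolynomial (Fin 2) F)) ≤
        RingHom.ker (aeval ![algebraMap F K x, y] : MvPolynomial (Fin 2) F →ₐ[F] K) := by
      rw [Ideal.span_le]
      rintro f (rfl | rfl)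
      · simp only [SetLike.mem_coe, RingHom.mem_ker, map_sub, map_pow, aeval_X]
        simp [← hxy]
      · simp only [SetLike.mem_coe, RingHom.mem_ker, map_sub, map_pow, aeval_X]
        simp [← map_pow, hpow]
    have h := hle hI
    simp only [RingHom.mem_ker, map_sub, map_pow, map_mul, aeval_X] at h
    simpa using (sub_eq_zero.1 h).symm
  obtain ⟨u, hu⟩ := IsCyclic.exists_generator (α := Fˣ)
  have hord : orderOf u = q ^ 2 - 1 := by
    rw [orderOf_eq_card_of_forall_mem_zpowers hu, Nat.card_units, Nat.card_eq_fintype_card, hF]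
  set z : K := algebraMap F K (u : F) with hz
  have hzq : z ^ (q ^ 2) = z := by rw [hz, ← map_pow, hpow]
  have key := reduced_coeff_eq_zero (F := F) (K := K) hq hqK hF
    (fun i j => algebraMap F K (g.coeff (Finsupp.single 0 i + Finsupp.single 1 j)) *
      (z ^ (i * q + j * (q + 1)) - z ^ (q * (a * q + b * (q + 1))))) (by
    intro x y hxy
    -- The scaled point `(z^q x, z^(q+1) y)` again lies on the curve, since `z^(q²) = z`.
    have h1 := hval ((u : F) ^ q * x) (z ^ (q + 1) * y) (by
      rw [map_mul, map_pow, ← hz]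
      have h2 : (z ^ (q + 1)) ^ q = z ^ (q + 1) := by
        calc (z ^ (q + 1)) ^ q = z ^ (q ^ 2) * z ^ q := by ring
          _ = z ^ (q + 1) := by rw [hzq]; ring
      have h3 : (z ^ q) ^ (q + 1) = z ^ (q + 1) := by
        rw [← pow_mul, mul_comm, pow_mul, h2]
      rw [mul_pow, mul_pow, h2, h3, ← hxy]
      ring)
    have h2 := hval x y hxy
    rw [aeval_reduced g hg] at h1 h2
    rw [map_mul, map_pow, ← hz] at h1
    have h3 : ((z ^ q * algebraMap F K x) ^ a * (z ^ (q + 1) * y) ^ b) ^ q =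
        z ^ (q * (a * q + b * (q + 1))) * (algebraMap F K x ^ a * y ^ b) ^ q := by
      ring
    rw [h3, ← h2, Finset.mul_sum, ← sub_eq_zero, ← Finset.sum_sub_distrib] at h1
    rw [← h1]
    refine Finset.sum_congr rfl fun j _ => ?_
    rw [Finset.mul_sum, ← Finset.sum_sub_distrib]
    refine Finset.sum_congr rfl fun i _ => ?_
    ring)
  intro m hm
  have h := key (m 0) (hg m hm).1 (m 1) (hg m hm).2
  have hm' : Finsupp.single 0 (m 0) + Finsupp.single 1 (m 1) = m := by
    ext k
    fin_cases k <;> simp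
  simp only [hm'] at h
  have hc : algebraMap F K (g.coeff m) ≠ 0 := by
    simpa using mem_support_iff.1 hm
  have h' := sub_eq_zero.1 ((mul_eq_zero.1 h).resolve_left hc)
  rw [hz, ← map_pow, ← map_pow] at h'
  have h'' := (algebraMap F K).injective h'
  rw [← hord, ← pow_eq_pow_iff_modEq]
  exact Units.ext (by simpa using h'')

theorem stmt_10 (p r q : ℕ) (hp : p.Prime) (hr : 0 < r) (hq : q = p ^ r)
    (F : Type) [Field F] [Fintype F] (hF : Fintype.card F = q ^ 2)
    (a b : ℕ) (hb : b < q) :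
    -- (1) each reduction step preserves the order modulo q²−1 …
    (∀ j ≤ b,
      q * mfun q (a * q + b * (q + 1) - j * (q + 1)) + j * (q + 1) ≡
        q * (a * q + b * (q + 1)) [MOD q ^ 2 - 1]) ∧
    -- … consequently, every monomial of a reduced polynomial congruent to (x^a y^b)^q
    -- modulo the ideal has order ≡ qν (mod q²−1)
    (∀ g : MvPolynomial (Fin 2) F,
      (∀ m ∈ g.support, m 0 < q ^ 2 ∧ m 1 < q) →
      ((X 0 ^ a * X 1 ^ b : MvPolynomial (Fin 2) F) ^ q - g ∈
        Ideal.span ({X 0 ^ (q + 1) - X 1 ^ q - X 1, X 0 ^ (q ^ 2) - X 0} :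
          Set (MvPolynomial (Fin 2) F))) →
      ∀ m ∈ g.support,
        m 0 * q + m 1 * (q + 1) ≡ q * (a * q + b * (q + 1)) [MOD q ^ 2 - 1]) ∧
    -- (2) if (q+1) ∣ ν then ν ≡ qν (mod q²−1)
    ((q + 1) ∣ a * q + b * (q + 1) →
      a * q + b * (q + 1) ≡ q * (a * q + b * (q + 1)) [MOD q ^ 2 - 1]) := by
  have hq1 : 1 < q := by
    rw [hq]; exact Nat.one_lt_pow hr.ne' hp.one_lt
  refine ⟨?_, fun g hg hI => support_order_modEq hq1 hF a b g hg hI,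
    modEq_mul_of_dvd (by omega)⟩
  intro j hj
  have hle : j * (q + 1) ≤ a * q + b * (q + 1) :=
    (Nat.mul_le_mul_right _ hj).trans (Nat.le_add_left _ _)
  calc q * mfun q (a * q + b * (q + 1) - j * (q + 1)) + j * (q + 1)
      ≡ q * (a * q + b * (q + 1) - j * (q + 1)) + q * (j * (q + 1)) [MOD q ^ 2 - 1] :=
        ((mfun_modEq q _).mul_left q).add (modEq_mul_of_dvd (by omega) (Dvd.intro_left j rfl))
    _ = q * (a * q + b * (q + 1)) := by rw [← mul_add, Nat.sub_add_cancel hle]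
end

section
/- Let q = p^r be a prime power and let 0 ≤ j ≤ t < q be integers. If the p-illumination ρ_t(j) = 0, then the binomial coefficient binom(t,j) is nonzero modulo p. If ρ_t(j) > 0, then binom(t,j), binom(t,j−1), …, binom(t, j−ρ_t(j)+1) are all congruent to 0 modulo p, while binom(t, j−ρ_t(j)) is nonzero modulo p. -/
/-!
Lucas' theorem says that `p ∣ t.choose j` exactly when some base-`p` digit of `j` exceeds the
corresponding digit of `t` (`dvd_choose_iff`). Suppose such digits exist, let `m` be the largest
such position and put `M = p ^ (m + 1)`. A number modulo `M` is the value of its lowest `m + 1`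
digits, so the illumination is `ρ = j % M - t % M`, which is positive because the digits at
position `m` decide the comparison (`exists_pIllum_eq`).

For `k < ρ`, subtracting `k` from `j` leaves `j / M` unchanged and keeps the residue modulo `M`
above `t % M`, so some digit of `j - k` still exceeds that of `t`. For `k = ρ`, the residue becomes
`t % M`: the digits of `j - ρ` agree with those of `t` up to position `m` and with those of `j`
beyond it, so none exceeds the digit of `t`.
-/

/-- The `i`-th digit of `n` in base `p`. -/
def pDigit (p n i : ℕ) : ℕ := n / p ^ i % p

open Classical in
/-- The p-illumination `ρ_t(j)` of `j` with respect to `t`: if `i*` is the largest index with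
`j_{i*} > t_{i*}` (in base-`p` digits), then `ρ_t(j) = ∑_{i=0}^{i*} (j_i − t_i) p^i`; if no
such index exists, `ρ_t(j) = 0`. -/
noncomputable def pIllum (p t j : ℕ) : ℤ :=
  if ∃ i, pDigit p t i < pDigit p j i then
    ∑ i ∈ Finset.range (Nat.findGreatest (fun i => pDigit p t i < pDigit p j i) j + 1),
      ((pDigit p j i : ℤ) - (pDigit p t i : ℤ)) * (p : ℤ) ^ i
  else 0

/-- A form of Lucas' theorem: the binomial coefficient vanishes modulo `p` iff `j` is not in the
`p`-shadow of `t`. -/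
lemma dvd_choose_iff {p : ℕ} (hp : p.Prime) (t j : ℕ) :
    p ∣ t.choose j ↔ ∃ i, pDigit p t i < pDigit p j i := by
  have := Fact.mk hp
  have ht : t < p ^ (t + j) :=
    (Nat.lt_pow_self hp.one_lt).trans_le (Nat.pow_le_pow_right hp.pos (by omega))
  have hj : j < p ^ (t + j) :=
    (Nat.lt_pow_self hp.one_lt).trans_le (Nat.pow_le_pow_right hp.pos (by omega))
  rw [(Choose.choose_modEq_prod_range_choose_nat ht hj).dvd_iff dvd_rfl,
    hp.prime.dvd_finsetProd_iff]
  constructor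
  · rintro ⟨i, -, h⟩
    refine ⟨i, ?_⟩
    by_contra! hle
    -- `choose d e` with `e ≤ d < p` divides `d!`, which is prime to `p`.
    have hfac : p ∣ (t / p ^ i % p).factorial := by
      have hmul := Nat.choose_mul_factorial_mul_factorial hle
      rw [mul_assoc] at hmul
      exact hmul ▸ h.mul_right _
    exact absurd (hp.dvd_factorial.mp hfac) (Nat.mod_lt _ hp.pos).not_ge
  · rintro ⟨i, h⟩
    refine ⟨i, ?_, ?_⟩
    · by_contra hi
      have hle : p ^ (t + j) ≤ p ^ i := Nat.pow_le_pow_right hp.pos (by simpa using hi)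
      simp [pDigit, Nat.div_eq_of_lt (hj.trans_le hle)] at h
    · exact (Nat.choose_eq_zero_of_lt h) ▸ dvd_zero p

lemma mod_pow_eq_sum_pDigit (p n m : ℕ) :
    n % p ^ m = ∑ i ∈ Finset.range m, pDigit p n i * p ^ i := by
  induction m with
  | zero => simp [Nat.mod_one]
  | succ m ih => rw [Finset.sum_range_succ, ← ih, Nat.mod_pow_succ, pDigit, mul_comm (p ^ m)]

lemma pDigit_mod_pow (p n : ℕ) {i m : ℕ} (h : i < m) :
    pDigit p (n % p ^ m) i = pDigit p n i := by
  obtain ⟨d, rfl⟩ := Nat.exists_eq_add_of_lt h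
  rw [pDigit, pDigit, add_assoc, pow_add, Nat.mod_mul_right_div_self,
    Nat.mod_mod_of_dvd _ (Dvd.intro_left (p ^ d) (pow_succ p d).symm)]

lemma pDigit_div_pow (p n m i : ℕ) : pDigit p (n / p ^ m) i = pDigit p n (m + i) := by
  rw [pDigit, pDigit, pow_add, Nat.div_div_eq_div_mul]

/-- If some digit of `j` exceeds that of `t`, there is a cut-off `m` (one past the largest such
position) beyond which no digit does, and the illumination is the positive difference of the
residues modulo `p ^ m`. -/
lemma exists_pIllum_eq {p : ℕ} (hp : p.Prime) {t j : ℕ}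
    (h : ∃ i, pDigit p t i < pDigit p j i) :
    ∃ m, pIllum p t j = (j % p ^ m : ℕ) - (t % p ^ m : ℕ) ∧ t % p ^ m < j % p ^ m ∧
      ∀ i, m ≤ i → pDigit p j i ≤ pDigit p t i := by
  classical
  -- The search bound `j` in the definition is harmless: nonzero digits sit at positions `≤ j`.
  have hbound : ∀ i, pDigit p t i < pDigit p j i → i ≤ j := by
    intro i hi
    by_contra! hlt
    have hj : j < p ^ i := hlt.trans (Nat.lt_pow_self hp.one_lt)
    simp [pDigit, Nat.div_eq_of_lt hj] at hi
  set m := Nat.findGreatest (fun i => pDigit p t i < pDigit p j i) j with hm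
  have hspec : pDigit p t m < pDigit p j m := by
    obtain ⟨i, hi⟩ := h
    exact Nat.findGreatest_spec (P := fun i => pDigit p t i < pDigit p j i) (hbound i hi) hi
  refine ⟨m + 1, ?_, ?_, ?_⟩
  · rw [pIllum, if_pos h, mod_pow_eq_sum_pDigit p j, mod_pow_eq_sum_pDigit p t]
    push_cast
    rw [← Finset.sum_sub_distrib]
    refine Finset.sum_congr ?_ fun i _ => sub_mul _ _ _
    rw [hm]
  · rw [Nat.mod_pow_succ, Nat.mod_pow_succ]
    have h1 : t % p ^ m < p ^ m := Nat.mod_lt _ (pow_pos hp.pos m)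
    have h2 : p ^ m * (pDigit p t m + 1) ≤ p ^ m * pDigit p j m := Nat.mul_le_mul_left _ hspec
    calc t % p ^ m + p ^ m * (t / p ^ m % p)
        < p ^ m + p ^ m * (t / p ^ m % p) := Nat.add_lt_add_right h1 _
      _ = p ^ m * (pDigit p t m + 1) := by rw [pDigit, mul_add_one, add_comm]
      _ ≤ p ^ m * pDigit p j m := h2
      _ ≤ j % p ^ m + p ^ m * (j / p ^ m % p) := Nat.le_add_left _ _
  · intro i hi
    by_contra! hlt
    exact Nat.findGreatest_is_greatest (P := fun i => pDigit p t i < pDigit p j i)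
      (show m < i by omega) (hbound i hlt) hlt

theorem stmt_12 (p r q : ℕ) (hp : p.Prime) (hr : 0 < r) (hq : q = p ^ r)
    (t j : ℕ) (hj : j ≤ t) (ht : t < q) :
    (pIllum p t j = 0 → ¬ (p : ℕ) ∣ t.choose j) ∧
    (0 < pIllum p t j →
      (∀ k : ℕ, (k : ℤ) < pIllum p t j → (p : ℕ) ∣ t.choose (j - k)) ∧
      ¬ (p : ℕ) ∣ t.choose (j - (pIllum p t j).toNat)) := by
  by_cases h : ∃ i, pDigit p t i < pDigit p j i
  · obtain ⟨m, hρ, hlt, hhigh⟩ := exists_pIllum_eq hp h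
    have hM : t % p ^ m < p ^ m := Nat.mod_lt _ (pow_pos hp.pos m)
    have haM : j % p ^ m < p ^ m := Nat.mod_lt _ (pow_pos hp.pos m)
    have hjM := Nat.mod_add_div j (p ^ m)
    generalize j % p ^ m = a at hρ hlt haM hjM
    generalize hb : t % p ^ m = b at hρ hlt hM
    refine ⟨fun h0 => by omega, fun _ => ⟨fun k hk => ?_, ?_⟩⟩
    · rw [dvd_choose_iff hp]
      by_contra! hle
      have hsum : (j - k) % p ^ m ≤ t % p ^ m := by
        rw [mod_pow_eq_sum_pDigit, mod_pow_eq_sum_pDigit]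
        exact Finset.sum_le_sum fun i _ => Nat.mul_le_mul_right _ (hle i)
      have hjk : j - k = (a - k) + p ^ m * (j / p ^ m) := by omega
      rw [hjk, hb, Nat.add_mul_mod_self_left, Nat.mod_eq_of_lt (by omega)] at hsum
      omega
    · rw [dvd_choose_iff hp]
      push Not
      have hjρ : j - (pIllum p t j).toNat = b + p ^ m * (j / p ^ m) := by omega
      intro i
      rw [hjρ]
      rcases lt_or_ge i m with hi | hi
      · rw [← pDigit_mod_pow p _ hi, Nat.add_mul_mod_self_left, Nat.mod_eq_of_lt hM, ← hb,
          pDigit_mod_pow p _ hi]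
      · obtain ⟨d, rfl⟩ := Nat.exists_eq_add_of_le hi
        rw [← pDigit_div_pow, Nat.add_mul_div_left _ _ (pow_pos hp.pos m), Nat.div_eq_of_lt hM,
          zero_add, pDigit_div_pow]
        exact hhigh _ hi
  · exact ⟨fun _ => mt (dvd_choose_iff hp t j).mp h,
      fun hpos => by simp [pIllum, if_neg h] at hpos⟩
end

section
/- Let q be a prime power and let 0 ≤ k < q²−1. The number of pairs (a,b) of integers with 0 ≤ a < q², 0 ≤ b < q, and aq + b(q+1) ≡ k (mod q²−1) equals: q+2 if k = 0; q+1 if k ≠ 0 and (q+1) ∣ k; and q if k ≠ 0 and (q+1) ∤ k. -/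
/-!
Write `N = q² - 1 = (q - 1)(q + 1)`. Since `q * q ≡ 1 (mod N)`, the number `q` is invertible
modulo `N`, so for each of the `q` values of `b` exactly one `a` in `[0, N)` solves the congruence
(`card_main`). The only remaining value is `a = N`, where the congruence reads
`b(q + 1) ≡ k (mod (q - 1)(q + 1))`. That is solvable only when `q + 1` divides `k`, and then it
says `b ≡ k / (q + 1) (mod q - 1)`; on `[0, q)` this has one solution, or the two solutions
`0` and `q - 1` when `k = 0` (`card_extra`).
-/

/-- Each `b < q` admits exactly one `a < N`, because `q` is its own inverse modulo `N`. -/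
lemma card_main (q N k : ℕ) (hN : q * q = N + 1) (hpos : 0 < N) :
    ((Finset.range N ×ˢ Finset.range q).filter
        (fun ab => (ab.1 * q + ab.2 * (q + 1)) % N = k % N)).card = q := by
  conv_rhs => rw [← Finset.card_range q]
  have hcop : Nat.gcd N q = 1 := by
    have h1 : Nat.gcd N q ∣ N + 1 := hN ▸ (Nat.gcd_dvd_right N q).mul_right q
    exact Nat.dvd_one.mp ((Nat.dvd_add_right (Nat.gcd_dvd_left N q)).mp h1)
  refine Finset.card_bij (fun ab _ => ab.2) ?_ ?_ ?_
  · rintro ⟨a, b⟩ h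
    simp only [Finset.mem_filter, Finset.mem_product] at h
    exact h.1.2
  · rintro ⟨a, b⟩ h ⟨a', b'⟩ h' (rfl : b = b')
    simp only [Finset.mem_filter, Finset.mem_product, Finset.mem_range] at h h'
    have e : a * q + b * (q + 1) ≡ a' * q + b * (q + 1) [MOD N] := h.2.trans h'.2.symm
    have e2 : a ≡ a' [MOD N] :=
      Nat.ModEq.cancel_right_of_coprime hcop (Nat.ModEq.add_right_cancel' _ e)
    rw [Nat.ModEq.eq_of_lt_of_lt e2 h.1.1 h'.1.1]
  · intro b hb
    obtain ⟨M, rfl⟩ : ∃ M, N = M + 1 := ⟨N - 1, by omega⟩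
    -- the solution `q * k - b * (q + 1)`, with `M` standing for `-1` modulo `M + 1`
    refine ⟨((k * q + b * (q + 1) * M) % (M + 1), b), ?_, rfl⟩
    simp only [Finset.mem_filter, Finset.mem_product, Finset.mem_range]
    refine ⟨⟨Nat.mod_lt _ hpos, Finset.mem_range.mp hb⟩, ?_⟩
    have e : (k * q + b * (q + 1) * M) % (M + 1) * q + b * (q + 1) ≡
        (k * q + b * (q + 1) * M) * q + b * (q + 1) [MOD M + 1] :=
      ((Nat.mod_modEq _ _).mul_right q).add_right _
    have e2 : (k * q + b * (q + 1) * M) * q + b * (q + 1) =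
        k + (M + 1) * (k + b * M + b * (q + 1)) := by
      linear_combination (k + b * M) * hN
    rw [e2] at e
    exact e.trans (by simp [Nat.ModEq])

/-- The solutions with `a = N`, where `q = m + 1` and `N = m * (m + 2)`. -/
lemma card_extra (m k : ℕ) (hm : 0 < m) (hk : k < m * (m + 2)) :
    ((Finset.range (m + 1)).filter (fun b => b * (m + 2) % (m * (m + 2)) = k)).card =
      if k = 0 then 2 else if (m + 2) ∣ k then 1 else 0 := by
  simp only [Nat.mul_mod_mul_right]
  split_ifs with h0 hd
  · subst h0
    have : (Finset.range (m + 1)).filter (fun b => b % m * (m + 2) = 0) = {0, m} := by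
      ext b
      simp only [Finset.mem_filter, Finset.mem_range, Finset.mem_insert, Finset.mem_singleton]
      constructor
      · rintro ⟨h1, h2⟩
        have h3 : b % m = 0 := by simpa using h2
        by_contra! h
        rw [Nat.mod_eq_of_lt (by omega)] at h3
        omega
      · rintro (rfl | rfl) <;> simp
    rw [this, Finset.card_pair (by omega)]
  · obtain ⟨c, rfl⟩ := hd
    have hc : c < m := by
      rw [mul_comm] at hk
      exact Nat.lt_of_mul_lt_mul_right hk
    have hc0 : c ≠ 0 := by rintro rfl; simp at h0
    rw [Finset.card_eq_one]
    refine ⟨c, ?_⟩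
    ext b
    simp only [Finset.mem_filter, Finset.mem_range, Finset.mem_singleton]
    constructor
    · rintro ⟨h1, h2⟩
      have h3 : b % m = c := by
        rw [mul_comm] at h2
        exact Nat.eq_of_mul_eq_mul_left (by omega) h2
      rcases Nat.lt_succ_iff_lt_or_eq.mp h1 with h | rfl
      · rwa [Nat.mod_eq_of_lt h] at h3
      · simp at h3; omega
    · rintro rfl
      exact ⟨by omega, by rw [Nat.mod_eq_of_lt hc, mul_comm]⟩
  · rw [Finset.card_eq_zero, Finset.filter_eq_empty_iff]
    intro b _ h
    exact hd ⟨b % m, by rw [← h, mul_comm]⟩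

theorem stmt_14 (q : ℕ) (hq : IsPrimePow q) (k : ℕ) (hk : k < q ^ 2 - 1) :
    ((Finset.range (q ^ 2) ×ˢ Finset.range q).filter
        (fun ab => (ab.1 * q + ab.2 * (q + 1)) % (q ^ 2 - 1) = k % (q ^ 2 - 1))).card =
      if k = 0 then q + 2 else if (q + 1) ∣ k then q + 1 else q := by
  have hq1 := hq.one_lt
  obtain ⟨m, rfl⟩ : ∃ m, q = m + 1 := ⟨q - 1, by omega⟩
  have hsq : (m + 1) ^ 2 = m * (m + 2) + 1 := by ring
  rw [hsq, Nat.add_sub_cancel] at hk ⊢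
  have hm : 0 < m := by omega
  have hNpos : 0 < m * (m + 2) := by positivity
  have hmain := card_main (m + 1) (m * (m + 2)) k (by ring) hNpos
  have hextra := card_extra m k hm hk
  have hN (b : ℕ) : (m * (m + 2) * (m + 1) + b * (m + 1 + 1)) % (m * (m + 2)) =
      b * (m + 2) % (m * (m + 2)) := Nat.mul_add_mod _ _ _
  rw [Finset.card_filter, Finset.sum_product] at hmain ⊢
  rw [Finset.sum_range_succ, hmain]
  simp only [hN, Nat.mod_eq_of_lt hk]
  rw [← Finset.card_filter, hextra]
  split_ifs <;> rfl
end

section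
/- Let q be a prime power and m* = ⌊q³/2 + (q²−q)/2 − 1⌋. For every integer k with 0 ≤ k < q²−1, there exist integers a, b with 0 ≤ a < q², 0 ≤ b < q, aq + b(q+1) ≤ m*, and aq + b(q+1) ≡ k (mod q²−1). That is, the map sending a reduced monomial of order at most m* to its order modulo q²−1 is surjective onto Z/(q²−1)Z. -/
/-!
Write `k = u q + v` with `0 ≤ v < q`. If `v ≤ u`, then `k = (u - v) q + v (q + 1)` is itself the
order of a reduced monomial. If `u < v`, then
`k + (q² - 1) = (u + q) q + (v - 1) = (u + q - (v - 1)) q + (v - 1) (q + 1)` is, and it is small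
enough: `u ≤ q - 2` gives `k + (q² - 1) ≤ 2 q² - q - 2`, which is at most the bound for `q ≥ 2`.
-/

/-- The largest order that is needed, `2 q² - q - 2`, is at most the bound `m*`.
Equality holds at `q = 2`. -/
lemma two_mul_sq_le_bound (q : ℕ) (hq : 2 ≤ q) :
    2 * q ^ 2 ≤ (q ^ 3 / 2 + (q ^ 2 - q) / 2 - 1) + q + 2 := by
  rcases hq.eq_or_lt with rfl | h3
  · norm_num
  · have h1 : 3 * q ^ 2 ≤ q ^ 3 := by nlinarith [sq_nonneg q]
    -- `q ^ 2 - q` is even, so its half loses nothing to rounding.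
    have h2 : (q ^ 2 - q) % 2 = 0 := by
      have := (Nat.even_mul_pred_self q).two_dvd
      rw [Nat.mul_sub_one, ← pow_two] at this
      omega
    have h4 : q ≤ q ^ 2 := by nlinarith
    omega

theorem stmt_15 (q : ℕ) (hq : IsPrimePow q) (k : ℕ) (hk : k < q ^ 2 - 1) :
    ∃ a b : ℕ, a < q ^ 2 ∧ b < q ∧
      a * q + b * (q + 1) ≤ q ^ 3 / 2 + (q ^ 2 - q) / 2 - 1 ∧
      a * q + b * (q + 1) ≡ k [MOD q ^ 2 - 1] := by
  have h2 : 2 ≤ q := hq.two_le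
  have hB := two_mul_sq_le_bound q h2
  have hsq : 2 * q ≤ q ^ 2 := by nlinarith
  obtain ⟨u, v, hv, rfl⟩ : ∃ u v, v < q ∧ k = u * q + v :=
    ⟨k / q, k % q, Nat.mod_lt _ (by omega), (Nat.div_add_mod' k q).symm⟩
  have hu : u < q := by
    by_contra! h
    have : q * q ≤ u * q := Nat.mul_le_mul_right q h
    rw [← pow_two] at this
    omega
  by_cases hvu : v ≤ u
  · obtain ⟨a, rfl⟩ := Nat.exists_eq_add_of_le hvu
    have he : a * q + v * (q + 1) = (v + a) * q + v := by ring
    refine ⟨a, v, by omega, hv, ?_, by rw [he]⟩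
    rw [he]
    omega
  · obtain ⟨d, rfl⟩ : ∃ d, v = d + 1 := ⟨v - 1, by omega⟩
    obtain ⟨a, ha⟩ : ∃ a, u + q = d + a := Nat.exists_eq_add_of_le (by omega)
    have he : a * q + d * (q + 1) = (u * q + (d + 1)) + (q ^ 2 - 1) := by
      have h5 : (u + q) * q = (d + a) * q := by rw [ha]
      have h6 : a * q + d * (q + 1) + 1 = u * q + (d + 1) + q ^ 2 := by
        linear_combination -h5
      omega
    refine ⟨a, d, by omega, by omega, ?_, ?_⟩
    · have h7 : (u + 2) * q ≤ q * q := Nat.mul_le_mul_right q (by omega)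
      rw [add_mul, ← pow_two] at h7
      omega
    · rw [he]
      exact Nat.add_modEq_right
end

section
/- Let q be a prime power and let (a,b) be a pair of integers with 0 ≤ a < q² and 0 ≤ b < q. Suppose that every pair (a',b') with 0 ≤ a' < q², 0 ≤ b' < q, and a'q + b'(q+1) ≡ aq + b(q+1) (mod q²−1) satisfies a'q + b'(q+1) ≤ aq + b(q+1). Then (q−2)(q+1) < a ≤ (q−1)(q+1) and 0 < b < q. -/
/-!
Two moves preserve the residue of the order modulo `q ^ 2 - 1` and raise the order by exactly
`q ^ 2 - 1`: replacing `(a, 0)` by `(a, q - 1)`, and replacing `(a, b)` by `(a + q + 1, b - 1)`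
when `0 < b`. At a maximal pair neither may stay in range, so `0 < b` and
`q ^ 2 ≤ a + q + 1`, the latter being `(q - 2) * (q + 1) < a`. The remaining bounds are the ranges
of `a` and `b`.
-/

theorem stmt_16 (q : ℕ) (hq : IsPrimePow q) (a b : ℕ) (ha : a < q ^ 2) (hb : b < q)
    (hmax : ∀ a' b' : ℕ, a' < q ^ 2 → b' < q →
      a' * q + b' * (q + 1) ≡ a * q + b * (q + 1) [MOD q ^ 2 - 1] →
      a' * q + b' * (q + 1) ≤ a * q + b * (q + 1)) :
    (q - 2) * (q + 1) < a ∧ a ≤ (q - 1) * (q + 1) ∧ 0 < b ∧ b < q := by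
  have h2 := hq.two_le
  -- Writing `q = n + 2` removes the truncated subtractions.
  obtain ⟨n, rfl⟩ := Nat.exists_eq_add_of_le' h2
  have hN : (n + 2) ^ 2 - 1 = (n + 1) * (n + 3) := by
    rw [show (n + 2) ^ 2 = (n + 1) * (n + 3) + 1 by ring, Nat.add_sub_cancel]
  rw [hN] at hmax
  have key : ∀ a' b' : ℕ, a' < (n + 2) ^ 2 → b' < n + 2 →
      a' * (n + 2) + b' * (n + 2 + 1) =
        a * (n + 2) + b * (n + 2 + 1) + (n + 1) * (n + 3) → False := by
    intro a' b' ha' hb' h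
    have := hmax a' b' ha' hb' (by rw [h]; simp [Nat.ModEq])
    have : 0 < (n + 1) * (n + 3) := by positivity
    omega
  have hb0 : 0 < b := by
    rcases Nat.eq_zero_or_pos b with rfl | h
    · exact (key a (n + 1) ha (by omega) (by ring)).elim
    · exact h
  have ha2 : (n + 2) ^ 2 ≤ a + (n + 3) := by
    by_contra! h
    obtain ⟨c, rfl⟩ := Nat.exists_eq_add_of_le' hb0
    exact key (a + (n + 3)) c h (by omega) (by ring)
  rw [show n + 2 - 2 = n by omega, show n + 2 - 1 = n + 1 by omega]
  exact ⟨by nlinarith, by nlinarith, hb0, hb⟩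
end

section
/- Let q be a prime power and F_{q²} the finite field with q² elements. The number of pairs (α,β) ∈ F_{q²}² satisfying α^{q+1} = β^q + β is exactly q³; that is, the Hermitian curve over F_{q²} has q³ affine rational points. -/
/-!
Let `T b = b ^ q + b` be the trace map of `F` over its subfield of order `q`. It is additive because
`q` is a power of the characteristic. Its kernel is the zero set of `X ^ q + X`, and its range lies in
the fixed set `{x | x ^ q = x}` of the `q`-Frobenius because `b ^ (q ^ 2) = b`; by counting roots
both have at most `q` elements. As `|ker T| * |range T| = q ^ 2`, both bounds are equalities, so the
range of `T` is the whole fixed set. Every norm `a ^ (q + 1)` is fixed by the `q`-Frobenius, hence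
each of the `q ^ 2` values of `a` has exactly `|ker T| = q` partners `b`, which gives `q ^ 3` points.
-/

open Polynomial in
theorem ncard_pow_add_mul_eq_zero_le {F : Type*} [Field F] {q : ℕ} (hq : 1 < q) (c : F) :
    {x : F | x ^ q + c * x = 0}.ncard ≤ q := by
  classical
  have hdeg : (X ^ q + C c * X : F[X]).natDegree = q := by
    rw [natDegree_add_eq_left_of_natDegree_lt, natDegree_X_pow]
    rw [natDegree_X_pow]
    exact ((natDegree_C_mul_le c X).trans natDegree_X_le).trans_lt hq
  have h0 : (X ^ q + C c * X : F[X]) ≠ 0 := by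
    intro h
    rw [h, natDegree_zero] at hdeg
    omega
  have hset : {x : F | x ^ q + c * x = 0} = ↑((X ^ q + C c * X : F[X]).roots.toFinset) := by
    ext x
    simp [mem_roots h0]
  rw [hset, Set.ncard_coe_finset]
  exact (Multiset.toFinset_card_le _).trans ((card_roots' _).trans hdeg.le)

theorem stmt_19 (p r q : ℕ) (hp : p.Prime) (hr : 0 < r) (hq : q = p ^ r)
    (F : Type) [Field F] [Fintype F] [DecidableEq F] (hF : Fintype.card F = q ^ 2) :
    Fintype.card {ab : F × F // ab.1 ^ (q + 1) = ab.2 ^ q + ab.2} = q ^ 3 := by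
  have hq1 : 1 < q := hq ▸ Nat.one_lt_pow hr.ne' hp.one_lt
  have : Fact p.Prime := ⟨hp⟩
  have : CharP F p := charP_of_card_eq_prime_pow (f := r * 2) (by rw [hF, hq, pow_mul])
  have hadd (x y : F) : (x + y) ^ q = x ^ q + y ^ q := by rw [hq, add_pow_char_pow]
  have hfrob (x : F) : (x ^ q) ^ q = x := by
    rw [← pow_mul, ← sq, ← hF, FiniteField.pow_card]
  let T : F →+ F := AddMonoidHom.mk' (fun b => b ^ q + b) (fun x y => by rw [hadd]; ring)
  have hT (b : F) : T b = b ^ q + b := rfl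
  have hker : Nat.card T.ker ≤ q := by
    have h := ncard_pow_add_mul_eq_zero_le hq1 (1 : F)
    have e : {x : F | x ^ q + 1 * x = 0} = (T.ker : Set F) := by
      ext x
      simp [AddMonoidHom.mem_ker, hT]
    rwa [e] at h
  have hfix : {x : F | x ^ q = x}.ncard ≤ q := by
    have h := ncard_pow_add_mul_eq_zero_le hq1 (-1 : F)
    simpa [← sub_eq_add_neg, sub_eq_zero] using h
  have hsub : (T.range : Set F) ⊆ {x : F | x ^ q = x} := by
    rintro _ ⟨b, rfl⟩
    rw [Set.mem_ofPred_eq, hT, hadd, hfrob, add_comm]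
  have hran : Nat.card T.range ≤ q := (Set.ncard_le_ncard hsub).trans hfix
  have hmul : Nat.card T.ker * Nat.card T.range = q * q := by
    rw [← AddSubgroup.index_ker, AddSubgroup.card_mul_index, Nat.card_eq_fintype_card, hF, sq]
  have hkq : Nat.card T.ker = q := by nlinarith
  have hrq : Nat.card T.range = q := by nlinarith
  have hrange : (T.range : Set F) = {x : F | x ^ q = x} :=
    Set.eq_of_subset_of_ncard_le hsub (hfix.trans hrq.ge)
  have hsurj (a : F) : ∃ b, T b = a ^ (q + 1) := by
    have h : a ^ (q + 1) ∈ (T.range : Set F) := by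
      rw [hrange, Set.mem_ofPred_eq, pow_succ, mul_pow, hfrob, mul_comm]
    exact h
  choose g hg using hsurj
  -- Translating by a chosen solution `g a` identifies the fibre over `a` with the kernel of `T`.
  let e : {ab : F × F // ab.1 ^ (q + 1) = ab.2 ^ q + ab.2} ≃ F × T.ker :=
    { toFun := fun x => (x.1.1, ⟨x.1.2 - g x.1.1, by
        rw [AddMonoidHom.mem_ker, map_sub, hg, hT, x.2, sub_self]⟩)
      invFun := fun y => ⟨(y.1, y.2.1 + g y.1), by
        have h : T y.2.1 = 0 := y.2.2
        change y.1 ^ (q + 1) = T (y.2.1 + g y.1)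
        rw [map_add, h, hg, zero_add]⟩
      left_inv := fun x => by ext <;> simp
      right_inv := fun y => by ext <;> simp }
  rw [← Nat.card_eq_fintype_card, Nat.card_congr e, Nat.card_prod, hkq,
    Nat.card_eq_fintype_card, hF, ← pow_succ]
end
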